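/- Let N, M be positive integers, let H be an N×M complex matrix, ĥ ∈ ℂ^N, let β be a real number with 0 < β ≤ 1, and let ε > 0. Define Z(μ) = (I − H Hᴴ (β⁻² μ I + H Hᴴ)⁻¹) H, Υ(μ) = diag(ĥ)ᴴ Z(μ) Z(μ)ᴴ diag(ĥ) and Γ(μ) = β² diag(ĥ)ᴴ H Hᴴ (μ I + β² H Hᴴ)⁻² H Hᴴ diag(ĥ). Suppose μₖ > 0, μₖ₊₁ > 0 and θₖ, θₖ₊₁ ∈ ℂ^N satisfy: (i) q_{Γ(μₖ)}(θₖ) ≥ ε²; (ii) q_{Γ(μₖ₊₁)}(θₖ) = ε²; (iii) q_{Υ(μₖ₊₁)}(θₖ₊₁) ≥ q_{Υ(μₖ₊₁)}(θₖ). Then μₖ ≤ μₖ₊₁ and q_{Υ(μₖ₊₁)}(θₖ₊₁) ≥ q_{Υ(μₖ)}(θₖ); that is, the objective values produced by the alternating optimization are monotone nondecreasing across iterations. -/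

import Mathlib

open Matrix

/-- `Z(μ) = (I − H Hᴴ (β⁻²μ I + H Hᴴ)⁻¹) H`. -/
noncomputable def Zmat {N M : ℕ} (H : Matrix (Fin N) (Fin M) ℂ) (β μ : ℝ) :
    Matrix (Fin N) (Fin M) ℂ :=
  ((1 : Matrix (Fin N) (Fin N) ℂ)
    - H * Hᴴ * (((((β : ℂ) ^ 2)⁻¹ * (μ : ℂ)) • 1 + H * Hᴴ)⁻¹)) * H

/-- `Υ(μ) = diag(ĥ)ᴴ Z(μ) Z(μ)ᴴ diag(ĥ)`. -/
noncomputable def Ups {N M : ℕ} (H : Matrix (Fin N) (Fin M) ℂ) (β μ : ℝ)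
    (hhat : Fin N → ℂ) : Matrix (Fin N) (Fin N) ℂ :=
  (Matrix.diagonal hhat)ᴴ * Zmat H β μ * (Zmat H β μ)ᴴ * Matrix.diagonal hhat

/-- `Γ(μ) = β² diag(ĥ)ᴴ H Hᴴ (μ I + β² H Hᴴ)⁻² H Hᴴ diag(ĥ)`. -/
noncomputable def Gam {N M : ℕ} (H : Matrix (Fin N) (Fin M) ℂ) (β μ : ℝ)
    (hhat : Fin N → ℂ) : Matrix (Fin N) (Fin N) ℂ :=
  ((β : ℂ) ^ 2) •
    ((Matrix.diagonal hhat)ᴴ * (H * Hᴴ)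
      * (((μ : ℂ) • 1 + ((β : ℂ) ^ 2) • (H * Hᴴ))⁻¹
          * ((μ : ℂ) • 1 + ((β : ℂ) ^ 2) • (H * Hᴴ))⁻¹)
      * (H * Hᴴ) * Matrix.diagonal hhat)


/-- Functional calculus in the basis `U`. -/
noncomputable def fcal {N : ℕ} (U : Matrix (Fin N) (Fin N) ℂ) (f : Fin N → ℝ) :
    Matrix (Fin N) (Fin N) ℂ :=
  U * Matrix.diagonal (fun i => (f i : ℂ)) * Uᴴ

lemma fcal_mul {N : ℕ} {U : Matrix (Fin N) (Fin N) ℂ} (hU : Uᴴ * U = 1) (f g : Fin N → ℝ) :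
    fcal U f * fcal U g = fcal U (fun i => f i * g i) := by
  unfold fcal
  calc _ = U * Matrix.diagonal (fun i => (f i : ℂ)) * (Uᴴ * U)
        * Matrix.diagonal (fun i => (g i : ℂ)) * Uᴴ := by simp only [Matrix.mul_assoc]
    _ = _ := by
      rw [hU, Matrix.mul_one, Matrix.mul_assoc U, Matrix.diagonal_mul_diagonal]
      simp

lemma fcal_lin {N : ℕ} {U : Matrix (Fin N) (Fin N) ℂ} (hU' : U * Uᴴ = 1) (a b : ℝ)
    (f : Fin N → ℝ) :
    (a : ℂ) • (1 : Matrix (Fin N) (Fin N) ℂ) + (b : ℂ) • fcal U f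
      = fcal U (fun i => a + b * f i) := by
  have h : Matrix.diagonal (fun i => ((a + b * f i : ℝ) : ℂ))
      = (a : ℂ) • (1 : Matrix (Fin N) (Fin N) ℂ)
        + (b : ℂ) • Matrix.diagonal (fun i => (f i : ℂ)) := by
    ext i j
    by_cases hij : i = j
    · subst hij; simp
    · simp [hij]
  unfold fcal
  rw [h, Matrix.mul_add, Matrix.add_mul]
  simp [hU']

lemma fcal_one {N : ℕ} {U : Matrix (Fin N) (Fin N) ℂ} (hU' : U * Uᴴ = 1) :
    fcal U (fun _ => 1) = 1 := by
  unfold fcal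
  simp [hU']

lemma fcal_inv {N : ℕ} {U : Matrix (Fin N) (Fin N) ℂ} (hU : Uᴴ * U = 1) (hU' : U * Uᴴ = 1)
    (f : Fin N → ℝ) (hf : ∀ i, f i ≠ 0) :
    (fcal U f)⁻¹ = fcal U (fun i => (f i)⁻¹) := by
  apply Matrix.inv_eq_right_inv
  rw [fcal_mul hU]
  simp only [mul_inv_cancel₀ (hf _)]
  exact fcal_one hU'

lemma fcal_herm {N : ℕ} (U : Matrix (Fin N) (Fin N) ℂ) (f : Fin N → ℝ) :
    (fcal U f)ᴴ = fcal U f := by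
  unfold fcal
  rw [Matrix.conjTranspose_mul, Matrix.conjTranspose_mul, Matrix.conjTranspose_conjTranspose,
    Matrix.diagonal_conjTranspose, Matrix.mul_assoc]
  congr 3
  ext i
  simp

lemma fcal_quad {N : ℕ} (U D : Matrix (Fin N) (Fin N) ℂ) (f : Fin N → ℝ) (θ : Fin N → ℂ) :
    (θ ⬝ᵥ ((Dᴴ * fcal U f * D) *ᵥ star θ)).re
      = ∑ i, f i * Complex.normSq ((Uᴴ *ᵥ (D *ᵥ star θ)) i) := by
  have h : θ ⬝ᵥ ((Dᴴ * fcal U f * D) *ᵥ star θ)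
      = star (Uᴴ *ᵥ (D *ᵥ star θ)) ⬝ᵥ
        (Matrix.diagonal (fun i => (f i : ℂ)) *ᵥ (Uᴴ *ᵥ (D *ᵥ star θ))) := by
    unfold fcal
    simp only [Matrix.star_mulVec, star_star, Matrix.conjTranspose_conjTranspose,
      ← Matrix.mulVec_mulVec, Matrix.dotProduct_mulVec, Matrix.vecMul_vecMul, Matrix.mul_assoc]
  rw [h, dotProduct, Complex.re_sum]
  refine Finset.sum_congr rfl fun i _ => ?_
  rw [Matrix.mulVec_diagonal]
  simp [Complex.normSq_apply]
  ring

open scoped ComplexOrder in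
lemma exists_fcal {N M : ℕ} (H : Matrix (Fin N) (Fin M) ℂ) :
    ∃ (U : Matrix (Fin N) (Fin N) ℂ) (l : Fin N → ℝ),
      Uᴴ * U = 1 ∧ U * Uᴴ = 1 ∧ (∀ i, 0 ≤ l i) ∧ H * Hᴴ = fcal U l := by
  have hp : (H * Hᴴ).PosSemidef := Matrix.posSemidef_self_mul_conjTranspose H
  refine ⟨hp.1.eigenvectorUnitary, hp.1.eigenvalues, ?_, ?_, hp.eigenvalues_nonneg, ?_⟩
  · exact Unitary.coe_star_mul_self hp.1.eigenvectorUnitary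
  · exact Unitary.coe_mul_star_self hp.1.eigenvectorUnitary
  · have := hp.1.spectral_theorem
    rw [Unitary.conjStarAlgAut_apply] at this
    exact this

lemma gam_quad {N M : ℕ} (H : Matrix (Fin N) (Fin M) ℂ) (U : Matrix (Fin N) (Fin N) ℂ)
    (l : Fin N → ℝ) (hU : Uᴴ * U = 1) (hU' : U * Uᴴ = 1) (hl : ∀ i, 0 ≤ l i)
    (hA : H * Hᴴ = fcal U l) (β μ : ℝ) (hμ : 0 < μ) (hhat θ : Fin N → ℂ) :
    (θ ⬝ᵥ (Gam H β μ hhat *ᵥ star θ)).re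
      = ∑ i, (β * l i / (μ + β ^ 2 * l i)) ^ 2
          * Complex.normSq ((Uᴴ *ᵥ (Matrix.diagonal hhat *ᵥ star θ)) i) := by
  have hne : ∀ i, μ + β ^ 2 * l i ≠ 0 := fun i => by
    have := hl i
    positivity
  have e : Gam H β μ hhat = ((β ^ 2 : ℝ) : ℂ) • ((Matrix.diagonal hhat)ᴴ
      * fcal U (fun i => l i * ((μ + β ^ 2 * l i)⁻¹ * (μ + β ^ 2 * l i)⁻¹) * l i)
      * Matrix.diagonal hhat) := by
    unfold Gam
    rw [hA, ← Complex.ofReal_pow, fcal_lin hU', fcal_inv hU hU' _ hne, ← fcal_mul hU, ← fcal_mul hU,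
      ← fcal_mul hU]
    simp only [Matrix.mul_assoc]
  rw [e, Matrix.smul_mulVec, dotProduct_smul, smul_eq_mul, Complex.re_ofReal_mul, fcal_quad,
    Finset.mul_sum]
  refine Finset.sum_congr rfl fun i _ => ?_
  rw [div_eq_mul_inv]
  ring

lemma ups_quad {N M : ℕ} (H : Matrix (Fin N) (Fin M) ℂ) (U : Matrix (Fin N) (Fin N) ℂ)
    (l : Fin N → ℝ) (hU : Uᴴ * U = 1) (hU' : U * Uᴴ = 1) (hl : ∀ i, 0 ≤ l i)
    (hA : H * Hᴴ = fcal U l) (β μ : ℝ) (hβ : 0 < β) (hμ : 0 < μ) (hhat θ : Fin N → ℂ) :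
    (θ ⬝ᵥ (Ups H β μ hhat *ᵥ star θ)).re
      = ∑ i, l i * (μ / (μ + β ^ 2 * l i)) ^ 2
          * Complex.normSq ((Uᴴ *ᵥ (Matrix.diagonal hhat *ᵥ star θ)) i) := by
  have hne : ∀ i, (β ^ 2)⁻¹ * μ + 1 * l i ≠ 0 := fun i => by
    have := hl i
    positivity
  have hne2 : ∀ i, μ + β ^ 2 * l i ≠ 0 := fun i => by
    have := hl i
    positivity
  have eB : (1 : Matrix (Fin N) (Fin N) ℂ)
      - H * Hᴴ * (((((β : ℂ) ^ 2)⁻¹ * (μ : ℂ)) • 1 + H * Hᴴ)⁻¹)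
      = fcal U (fun i => μ / (μ + β ^ 2 * l i)) := by
    have e1 : ((((β : ℂ) ^ 2)⁻¹ * (μ : ℂ)) • (1 : Matrix (Fin N) (Fin N) ℂ) + H * Hᴴ)
        = fcal U (fun i => (β ^ 2)⁻¹ * μ + 1 * l i) := by
      rw [← fcal_lin hU', hA]
      simp
    rw [e1, fcal_inv hU hU' _ hne, hA, fcal_mul hU]
    have e2 := fcal_lin hU' 1 (-1) (fun i => l i * ((β ^ 2)⁻¹ * μ + 1 * l i)⁻¹)
    have e3 : (fun i => μ / (μ + β ^ 2 * l i))
        = (fun i => 1 + -1 * (l i * ((β ^ 2)⁻¹ * μ + 1 * l i)⁻¹)) := by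
      funext i
      have h1 := hne i
      have h2 := hne2 i
      have h4 : (β ^ 2)⁻¹ * μ + 1 * l i = (μ + β ^ 2 * l i) / β ^ 2 := by
        field_simp
      rw [h4, inv_div]
      field_simp
      ring
    rw [e3, ← e2]
    simp [sub_eq_add_neg]
  have e : Ups H β μ hhat = (Matrix.diagonal hhat)ᴴ
      * fcal U (fun i => μ / (μ + β ^ 2 * l i) * l i * (μ / (μ + β ^ 2 * l i)))
      * Matrix.diagonal hhat := by
    unfold Ups Zmat
    rw [eB, Matrix.conjTranspose_mul, fcal_herm, ← fcal_mul hU, ← fcal_mul hU, ← hA]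
    simp only [Matrix.mul_assoc]
  rw [e, fcal_quad]
  refine Finset.sum_congr rfl fun i _ => ?_
  ring

/-- monotone improvement of the alternating optimization: if `θₖ` is
feasible at `μₖ`, `μₖ₊₁` solves the dual update `q_{Γ(μₖ₊₁)}(θₖ) = ε²`, and `θₖ₊₁` does
not decrease the objective at `μₖ₊₁`, then `μₖ ≤ μₖ₊₁` and the objective value does not
decrease across the iteration. -/
theorem alternating_optimization_monotone (N M : ℕ) (hN : 0 < N) (hM : 0 < M)
    (H : Matrix (Fin N) (Fin M) ℂ) (hhat : Fin N → ℂ) (β ε : ℝ)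
    (hβ : 0 < β) (hβ1 : β ≤ 1) (hε : 0 < ε)
    (μk μk1 : ℝ) (hμk : 0 < μk) (hμk1 : 0 < μk1)
    (θk θk1 : Fin N → ℂ)
    (h1 : (θk ⬝ᵥ (Gam H β μk hhat *ᵥ star θk)).re ≥ ε ^ 2)
    (h2 : (θk ⬝ᵥ (Gam H β μk1 hhat *ᵥ star θk)).re = ε ^ 2)
    (h3 : (θk1 ⬝ᵥ (Ups H β μk1 hhat *ᵥ star θk1)).re
            ≥ (θk ⬝ᵥ (Ups H β μk1 hhat *ᵥ star θk)).re) :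
    μk ≤ μk1 ∧
    (θk1 ⬝ᵥ (Ups H β μk1 hhat *ᵥ star θk1)).re
      ≥ (θk ⬝ᵥ (Ups H β μk hhat *ᵥ star θk)).re := by
  obtain ⟨U, l, hU, hU', hl, hA⟩ := exists_fcal H
  have hle : μk ≤ μk1 := by
    by_contra hlt
    push Not at hlt
    rw [gam_quad H U l hU hU' hl hA β _ hμk] at h1
    rw [gam_quad H U l hU hU' hl hA β _ hμk1] at h2
    set w := Uᴴ *ᵥ (Matrix.diagonal hhat *ᵥ star θk)
    have hex : ∃ i ∈ Finset.univ, (β * l i / (μk1 + β ^ 2 * l i)) ^ 2 * Complex.normSq (w i) ≠ 0 := by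
      apply Finset.exists_ne_zero_of_sum_ne_zero
      rw [h2]
      positivity
    obtain ⟨i, _, hi⟩ := hex
    have hli : 0 < l i := lt_of_le_of_ne (hl i) (fun h => hi (by simp [← h]))
    have hwi : 0 < Complex.normSq (w i) :=
      lt_of_le_of_ne (Complex.normSq_nonneg _) (fun h => hi (by simp [← h]))
    have hs : ∑ i, (β * l i / (μk + β ^ 2 * l i)) ^ 2 * Complex.normSq (w i)
        < ∑ i, (β * l i / (μk1 + β ^ 2 * l i)) ^ 2 * Complex.normSq (w i) := by
      refine Finset.sum_lt_sum (fun j _ => ?_) ⟨i, Finset.mem_univ _, ?_⟩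
      · have := hl j
        have := Complex.normSq_nonneg (w j)
        gcongr
      · gcongr
    linarith
  refine ⟨hle, ge_trans h3 ?_⟩
  rw [ups_quad H U l hU hU' hl hA β _ hβ hμk, ups_quad H U l hU hU' hl hA β _ hβ hμk1]
  refine Finset.sum_le_sum fun i _ => ?_
  have h5 := hl i
  have h6 := Complex.normSq_nonneg ((Uᴴ *ᵥ (Matrix.diagonal hhat *ᵥ star θk)) i)
  have h7 : μk / (μk + β ^ 2 * l i) ≤ μk1 / (μk1 + β ^ 2 * l i) := by
    rw [div_le_div_iff₀ (by positivity) (by positivity)]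
    have : 0 ≤ β ^ 2 * l i := by positivity
    nlinarith
  gcongr
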